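/- Let X and Y be complex Banach spaces, let R : X → Y be a bounded linear map, and let A, B : X → Y be bounded linear compact operators. Suppose there exists z₀ ∈ ℂ such that R + z₀·A + z₀²·B is boundedly invertible (i.e. it has a bounded linear two-sided inverse Y → X). Then the set S = { z ∈ ℂ : there exists u ∈ X, u ≠ 0, with (R + z·A + z²·B) u = 0 } is a closed subset of ℂ and every point of S is isolated in ℂ (S is discrete). -/

import Mathlib

/-- The set of `z ∈ ℂ` at which the quadratic pencil `R + z·A + z²·B` has nontrivial
kernel. -/
def critSet {X Y : Type*} [NormedAddCommGroup X] [NormedSpace ℂ X]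
    [NormedAddCommGroup Y] [NormedSpace ℂ Y]
    (R A B : X →L[ℂ] Y) : Set ℂ :=
  {z : ℂ | ∃ u : X, u ≠ 0 ∧ (R + z • A + z ^ 2 • B) u = 0}

lemma finite_eig {E : Type*} [NormedAddCommGroup E] [NormedSpace ℂ E]
    (D : E →L[ℂ] E) (hD : IsCompactOperator D) {δ : ℝ} (hδ : 0 < δ) :
    {μ : ℂ | δ ≤ ‖μ‖ ∧ ∃ x : E, x ≠ 0 ∧ D x = μ • x}.Finite := by
  by_contra hinf
  have hinf : {μ : ℂ | δ ≤ ‖μ‖ ∧ ∃ x : E, x ≠ 0 ∧ D x = μ • x}.Infinite := hinf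
  let e := hinf.natEmbedding
  let μ : ℕ → ℂ := fun n => (e n : ℂ)
  have hμinj : Function.Injective μ := fun a b h => e.injective (Subtype.ext h)
  have hμδ : ∀ n, δ ≤ ‖μ n‖ := fun n => (e n).2.1
  have hx' : ∀ n, ∃ x : E, x ≠ 0 ∧ D x = μ n • x := fun n => (e n).2.2
  choose x hx0 hx using hx'
  have hli : LinearIndependent ℂ x := by
    refine Module.End.eigenvectors_linearIndependent' (D : Module.End ℂ E) μ hμinj x ?_
    intro n
    rw [Module.End.hasEigenvector_iff]
    exact ⟨Module.End.mem_eigenspace_iff.2 (hx n), hx0 n⟩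
  let V : ℕ → Submodule ℂ E := fun n => Submodule.span ℂ (x '' Set.Iio n)
  have hVmono : Monotone V := fun a b h =>
    Submodule.span_mono (Set.image_mono (Set.Iio_subset_Iio h))
  have hVx : ∀ i n, i < n → x i ∈ V n := fun i n h => Submodule.subset_span ⟨i, h, rfl⟩
  have hVD : ∀ n, ∀ y ∈ V n, D y ∈ V n := by
    intro n
    have : V n ≤ (V n).comap (D : E →ₗ[ℂ] E) := by
      refine Submodule.span_le.2 ?_
      rintro _ ⟨i, hi, rfl⟩
      change D (x i) ∈ V n
      rw [hx]
      exact Submodule.smul_mem _ _ (hVx i n hi)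
    exact fun y hy => this hy
  have hVD' : ∀ n, ∀ y ∈ V (n+1), D y - μ n • y ∈ V n := by
    intro n
    have : V (n+1) ≤ (V n).comap ((D - μ n • ContinuousLinearMap.id ℂ E : E →L[ℂ] E) : E →ₗ[ℂ] E) := by
      refine Submodule.span_le.2 ?_
      rintro _ ⟨i, hi, rfl⟩
      change D (x i) - μ n • x i ∈ V n
      rw [hx]
      rcases (Nat.lt_succ_iff_lt_or_eq.1 hi) with h | h
      · exact Submodule.sub_mem _ (Submodule.smul_mem _ _ (hVx i n h))
          (Submodule.smul_mem _ _ (hVx i n h))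
      · subst h; simp
    exact fun y hy => this hy
  have hc : 1 < ‖(2 : ℂ)‖ := by simp
  have hy' : ∀ n, ∃ y ∈ V (n+1), ‖y‖ ≤ 3 ∧ ∀ z ∈ V n, 1 ≤ ‖y - z‖ := by
    intro n
    have hfd : FiniteDimensional ℂ (V n) :=
      FiniteDimensional.span_of_finite ℂ ((Set.finite_Iio n).image x)
    have hcl : IsClosed (V n : Set E) := Submodule.closed_of_finiteDimensional _
    have h₁ : IsClosed ((V n).comap (V (n+1)).subtype : Set (V (n+1))) :=
      hcl.preimage continuous_subtype_val
    have h₂ : ∃ w : V (n+1), w ∉ (V n).comap (V (n+1)).subtype := by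
      refine ⟨⟨x n, hVx n (n+1) (Nat.lt_succ_self n)⟩, ?_⟩
      change x n ∉ V n
      exact hli.notMem_span_image (by simp)
    obtain ⟨⟨y, hy⟩, hyn, hyz⟩ := riesz_lemma_of_norm_lt hc (R := 3) (by norm_num) h₁ h₂
    exact ⟨y, hy, hyn, fun z hz => hyz ⟨z, hVmono (Nat.le_succ n) hz⟩ hz⟩
  choose y hyV hyn hyz using hy'
  have hsep : ∀ m n, m < n → δ ≤ ‖D (y n) - D (y m)‖ := by
    intro m n hmn
    have hn0 : μ n ≠ 0 := norm_pos_iff.1 (hδ.trans_le (hμδ n))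
    have hmem : D (y m) - (D (y n) - μ n • y n) ∈ V n :=
      Submodule.sub_mem _ (hVD _ _ (hVmono hmn (hyV m))) (hVD' n _ (hyV n))
    have h1 := hyz n _ (Submodule.smul_mem _ (μ n)⁻¹ hmem)
    have h2 : D (y n) - D (y m)
        = μ n • (y n - (μ n)⁻¹ • (D (y m) - (D (y n) - μ n • y n))) := by
      rw [smul_sub, smul_inv_smul₀ hn0]; abel
    rw [h2, norm_smul]
    nlinarith [hμδ n, norm_nonneg (μ n)]
  obtain ⟨K, hK, hK'⟩ := hD.image_closedBall_subset_compact (f := (D : E →ₗ[ℂ] E)) 3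
  obtain ⟨a, -, ψ, hψ, hψy⟩ := hK.tendsto_subseq (x := fun n => D (y n))
    (fun n ↦ hK' ⟨y n, by simpa using hyn n, rfl⟩)
  replace hψy := hψy.cauchySeq
  rw [Metric.cauchySeq_iff'] at hψy
  obtain ⟨N, hN⟩ := hψy δ hδ
  have h := hN (N+1) (Nat.le_succ N)
  rw [dist_eq_norm] at h
  exact absurd h (not_lt.2 (hsep _ _ (hψ (Nat.lt_succ_self N))))

lemma critSet_finite {X Y : Type*} [NormedAddCommGroup X] [NormedSpace ℂ X]
    [NormedAddCommGroup Y] [NormedSpace ℂ Y]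
    (R A B : X →L[ℂ] Y) (hA : IsCompactOperator A) (hB : IsCompactOperator B)
    (z₀ : ℂ) (S₀ : Y →L[ℂ] X)
    (hS : S₀.comp (R + z₀ • A + z₀ ^ 2 • B) = ContinuousLinearMap.id ℂ X)
    (r : ℝ) (hr : 0 < r) : (critSet R A B ∩ Metric.closedBall z₀ r).Finite := by
  let K : X →L[ℂ] X := S₀.comp (A + (2 * z₀) • B)
  let L : X →L[ℂ] X := S₀.comp B
  have hL : IsCompactOperator L := hB.clm_comp S₀
  have hK : IsCompactOperator K := (hA.add (hB.smul (2 * z₀))).clm_comp S₀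
  let P : X × X →L[ℂ] X :=
    K.comp (ContinuousLinearMap.fst ℂ X X) + L.comp (ContinuousLinearMap.snd ℂ X X)
  have hP : IsCompactOperator P := (hK.comp_clm _).add (hL.comp_clm _)
  let Q : X × X →L[ℂ] X := K.comp P - L.comp (ContinuousLinearMap.fst ℂ X X)
  have hQ : IsCompactOperator Q := (hK.comp_clm P).sub (hL.comp_clm _)
  let D : X × X →L[ℂ] X × X :=
    (ContinuousLinearMap.inl ℂ X X).comp Q - (ContinuousLinearMap.inr ℂ X X).comp P
  have hD : IsCompactOperator D := (hQ.clm_comp (ContinuousLinearMap.inl ℂ X X)).sub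
    (hP.clm_comp (ContinuousLinearMap.inr ℂ X X))
  have hfin := finite_eig D hD (δ := (r ^ 2)⁻¹) (by positivity)
  refine Set.Finite.subset (Set.Finite.preimage' (f := fun z : ℂ => ((z - z₀) ^ 2)⁻¹) hfin ?_) ?_
  · intro μ _
    by_cases h : ∃ c : ℂ, ((c - z₀) ^ 2)⁻¹ = μ
    · obtain ⟨c, rfl⟩ := h
      refine Set.Finite.subset (Set.toFinite {c, 2 * z₀ - c}) ?_
      intro z hz
      have hz : ((z - z₀) ^ 2)⁻¹ = ((c - z₀) ^ 2)⁻¹ := hz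
      rcases sq_eq_sq_iff_eq_or_eq_neg.1 (inv_injective hz) with h | h
      · left; linear_combination h
      · right; change z = _; linear_combination h
    · convert Set.finite_empty
      ext z
      simp only [Set.mem_preimage, Set.mem_singleton_iff, Set.mem_empty_iff_false, iff_false]
      exact fun hz => h ⟨z, hz⟩
  · rintro z ⟨⟨u, hu, hz⟩, hzr⟩
    obtain ⟨w, rfl⟩ : ∃ w, z = z₀ + w := ⟨z - z₀, by ring⟩
    have hSu : S₀ (R u) + z₀ • S₀ (A u) + z₀ ^ 2 • S₀ (B u) = u := by
      simpa using congrArg (fun f : X →L[ℂ] X => f u) hS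
    have hzu : S₀ (R u) + (z₀ + w) • S₀ (A u) + (z₀ + w) ^ 2 • S₀ (B u) = 0 := by
      simpa using congrArg S₀ hz
    have hKu : K u = S₀ (A u) + (2 * z₀) • S₀ (B u) := by simp [K]
    have hLu : L u = S₀ (B u) := by simp [L]
    have key : u + w • (K u + w • L u) = 0 := by
      rw [hKu, hLu]
      nth_rewrite 1 [← hSu]
      rw [← hzu]
      module
    have hw : w ≠ 0 := by
      rintro rfl
      exact hu (by simpa using key)
    have hPu : P (u, w • u) = -(w⁻¹ • u) := by
      have h1 : P (u, w • u) = K u + w • L u := by simp [P]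
      rw [h1, ← smul_right_injective X hw |>.eq_iff]
      simp only [smul_neg, smul_inv_smul₀ hw]
      exact eq_neg_of_add_eq_zero_right key
    refine ⟨?_, (u, w • u), fun h => hu (congrArg Prod.fst h), ?_⟩
    · have : ‖w‖ ≤ r := by simpa using hzr
      simp only [add_sub_cancel_left, norm_inv, norm_pow]
      have : 0 < ‖w‖ := norm_pos_iff.2 hw
      gcongr
    · have hDu : D (u, w • u) = (Q (u, w • u), -P (u, w • u)) := by simp [D]
      have hQu : Q (u, w • u) = K (P (u, w • u)) - L u := by simp [Q]
      rw [hDu, hQu, hPu]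
      simp only [add_sub_cancel_left, Prod.smul_mk, neg_neg, map_neg, map_smul]
      congr 1
      · have h3 : u = -(w • (K u + w • L u)) := eq_neg_of_add_eq_zero_left key
        conv_rhs => rw [h3]
        match_scalars <;> field_simp
      · match_scalars; field_simp

/-- If the pencil `R + z·A + z²·B` (with `A, B` compact) is boundedly invertible for
some `z₀`, then the set of `z` with nontrivial kernel is closed and discrete. -/
theorem stmt7 {X Y : Type*} [NormedAddCommGroup X] [NormedSpace ℂ X] [CompleteSpace X]
    [NormedAddCommGroup Y] [NormedSpace ℂ Y] [CompleteSpace Y]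
    (R A B : X →L[ℂ] Y) (hA : IsCompactOperator A) (hB : IsCompactOperator B)
    (hinv : ∃ z₀ : ℂ, ∃ S₀ : Y →L[ℂ] X,
      S₀.comp (R + z₀ • A + z₀ ^ 2 • B) = ContinuousLinearMap.id ℂ X ∧
      (R + z₀ • A + z₀ ^ 2 • B).comp S₀ = ContinuousLinearMap.id ℂ Y) :
    IsClosed (critSet R A B) ∧
    ∀ z ∈ critSet R A B, ∃ ε > 0, critSet R A B ∩ Metric.ball z ε = {z} := by
  obtain ⟨z₀, S₀, hS, -⟩ := hinv
  have main : ∀ z : ℂ, ∃ ε > 0, critSet R A B ∩ Metric.ball z ε ⊆ {z} := by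
    intro z
    have hF := critSet_finite R A B hA hB z₀ S₀ hS (dist z z₀ + 1) (by positivity)
    have hcl := (hF.subset (Set.sdiff_subset (t := {z}))).isClosed
    obtain ⟨ε, hε, hb⟩ := Metric.isOpen_iff.1 hcl.isOpen_compl z (by simp)
    refine ⟨min ε 1, by positivity, ?_⟩
    rintro t ⟨ht, htb⟩
    rw [Metric.mem_ball, lt_min_iff] at htb
    by_contra hne
    refine hb (Metric.mem_ball.2 htb.1) ⟨⟨ht, ?_⟩, hne⟩
    rw [Metric.mem_closedBall]
    linarith [dist_triangle t z z₀]
  constructor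
  · rw [← isOpen_compl_iff, Metric.isOpen_iff]
    intro z hz
    obtain ⟨ε, hε, h⟩ := main z
    refine ⟨ε, hε, fun t ht hts => hz ?_⟩
    have : t = z := h ⟨hts, ht⟩
    exact this ▸ hts
  · intro z hz
    obtain ⟨ε, hε, h⟩ := main z
    refine ⟨ε, hε, h.antisymm ?_⟩
    rintro _ rfl
    exact ⟨hz, Metric.mem_ball_self hε⟩
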